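/- arXiv:2507.16610 — 2 statements merged into one kernel-verified Lean document; each statement's English description precedes it below -/
import Mathlib

section
/- For C ∈ [0, 2], the maximum of z² − x² over all nonnegative real triples (x, y, z) satisfying x² + y² + z² = 1 and x + y + z = √(1 + C) equals (1/2)·√((1 + f₃ + C/3)·(1 + f₃ − C)), where f₃ = √(1 + C)·√(1 − C/3). -/
theorem stmt13 (C : ℝ) (hC : C ∈ Set.Icc (0 : ℝ) 2) :
    IsGreatest
      { w : ℝ | ∃ x y z : ℝ, 0 ≤ x ∧ 0 ≤ y ∧ 0 ≤ z ∧
          x ^ 2 + y ^ 2 + z ^ 2 = 1 ∧ x + y + z = Real.sqrt (1 + C) ∧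
          w = z ^ 2 - x ^ 2 }
      ((1 / 2) * Real.sqrt
        ((1 + Real.sqrt (1 + C) * Real.sqrt (1 - C / 3) + C / 3) *
          (1 + Real.sqrt (1 + C) * Real.sqrt (1 - C / 3) - C))) := by
  obtain ⟨h0, h2⟩ := hC
  have hS2 : Real.sqrt (1 + C) ^ 2 = 1 + C := Real.sq_sqrt (by linarith)
  have hT2 : Real.sqrt (1 - C / 3) ^ 2 = 1 - C / 3 := Real.sq_sqrt (by linarith)
  have hS0 : 0 ≤ Real.sqrt (1 + C) := Real.sqrt_nonneg _
  have hT0 : 0 ≤ Real.sqrt (1 - C / 3) := Real.sqrt_nonneg _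
  generalize Real.sqrt (1 + C) = S at *
  generalize Real.sqrt (1 - C / 3) = T at *
  have hTS : T ≤ S := abs_le_of_sq_le_sq' (by linarith) hS0 |>.2
  have hST : S ≤ 3 * T := abs_le_of_sq_le_sq' (by nlinarith) (by linarith) |>.2
  have hC1 : C = S ^ 2 - 1 := by linarith
  have hrel : S ^ 2 + 3 * T ^ 2 = 4 := by linarith
  have e1 : 1 + S * T + C / 3 = (S + T) ^ 2 / 2 := by linarith
  have e2 : 1 + S * T - C = (3 * T - S) * (S + T) / 2 := by linarith
  rw [e1, e2]
  have hq0 : 0 ≤ (S + T) * (3 * T - S) / 4 := by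
    have := mul_nonneg (add_nonneg hS0 hT0) (sub_nonneg.2 hST)
    linarith
  constructor
  · have hd2 := Real.sq_sqrt hq0
    have hd0 := Real.sqrt_nonneg ((S + T) * (3 * T - S) / 4)
    have e3 : (S + T) ^ 2 / 2 * ((3 * T - S) * (S + T) / 2)
        = (S + T) ^ 2 * ((S + T) * (3 * T - S) / 4) := by ring
    rw [e3, Real.sqrt_mul (sq_nonneg _), Real.sqrt_sq (add_nonneg hS0 hT0)]
    generalize Real.sqrt ((S + T) * (3 * T - S) / 4) = d at *
    have hdp : d ≤ (S + T) / 2 :=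
      abs_le_of_sq_le_sq' (by nlinarith [mul_nonneg (add_nonneg hS0 hT0) (sub_nonneg.2 hTS)])
        (by linarith) |>.2
    refine ⟨((S + T) / 2 - d) / 2, (S - T) / 2, ((S + T) / 2 + d) / 2,
      by linarith, by linarith, by linarith, ?_, by ring, by ring⟩
    linear_combination hd2 / 2 + hrel / 4
  · rintro w ⟨x, y, z, hx, hy, hz, h1, hs, rfl⟩
    have key : (2 * (z ^ 2 - x ^ 2)) ^ 2 ≤ (S + T) ^ 2 / 2 * ((3 * T - S) * (S + T) / 2) := by
      have hp : 0 ≤ z + x := by linarith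
      have hyv : y = S - (z + x) := by linarith
      have hd : (z - x) ^ 2 = -3 * (z + x) ^ 2 + 4 * S * (z + x) + (3 * T ^ 2 - 3 * S ^ 2) / 2 := by
        subst hyv
        linear_combination 2 * h1 - hrel / 2
      have e : (2 * (z ^ 2 - x ^ 2)) ^ 2 = 4 * ((z + x) ^ 2 * (z - x) ^ 2) := by ring
      rw [e, hd]
      generalize z + x = p at *
      have ha : 0 ≤ 3 * T - S := by linarith
      have hnn : 0 ≤ (p - (S + T) / 2) ^ 2 *
          (3 * p ^ 2 + (3 * T - S) * p + (S + T) * (3 * T - S) / 4) := by positivity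
      nlinarith [hnn]
    have := Real.le_sqrt_of_sq_le key
    linarith
end

section
/- For C ∈ [0, 2], the minimum of x·z over all nonnegative real triples (x, y, z) satisfying x² + y² + z² = 1 and x + y + z = √(1 + C) is: 0 if 0 ≤ C ≤ 1; (C − 1)/4 if 1 ≤ C ≤ 5/3; and (1/9)·(√(1 + C) − √(1 − C/2))² if 5/3 ≤ C ≤ 2. -/
theorem stmt16 (C : ℝ) (hC : C ∈ Set.Icc (0 : ℝ) 2) :
    (C ≤ 1 →
      IsLeast { w : ℝ | ∃ x y z : ℝ, 0 ≤ x ∧ 0 ≤ y ∧ 0 ≤ z ∧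
          x ^ 2 + y ^ 2 + z ^ 2 = 1 ∧ x + y + z = Real.sqrt (1 + C) ∧
          w = x * z } 0) ∧
    (1 ≤ C → C ≤ 5 / 3 →
      IsLeast { w : ℝ | ∃ x y z : ℝ, 0 ≤ x ∧ 0 ≤ y ∧ 0 ≤ z ∧
          x ^ 2 + y ^ 2 + z ^ 2 = 1 ∧ x + y + z = Real.sqrt (1 + C) ∧
          w = x * z } ((C - 1) / 4)) ∧
    (5 / 3 ≤ C →
      IsLeast { w : ℝ | ∃ x y z : ℝ, 0 ≤ x ∧ 0 ≤ y ∧ 0 ≤ z ∧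
          x ^ 2 + y ^ 2 + z ^ 2 = 1 ∧ x + y + z = Real.sqrt (1 + C) ∧
          w = x * z }
        ((1 / 9) * (Real.sqrt (1 + C) - Real.sqrt (1 - C / 2)) ^ 2)) := by
  obtain ⟨h0, h2⟩ := hC
  have hs := Real.sqrt_nonneg (1 + C)
  have hss : Real.sqrt (1 + C) ^ 2 = 1 + C := Real.sq_sqrt (by linarith)
  generalize Real.sqrt (1 + C) = s at *
  refine ⟨fun h1 => ⟨?_, ?_⟩, fun h1 h53 => ⟨?_, ?_⟩, fun h53 => ⟨?_, ?_⟩⟩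
  · have hr := Real.sqrt_nonneg (1 - C)
    have hrr : Real.sqrt (1 - C) ^ 2 = 1 - C := Real.sq_sqrt (by linarith)
    generalize Real.sqrt (1 - C) = r at *
    have : r ≤ s := abs_le_of_sq_le_sq' (by linarith) hs |>.2
    exact ⟨0, (s + r) / 2, (s - r) / 2, le_rfl, by linarith, by linarith, by nlinarith, by ring,
      by ring⟩
  · rintro w ⟨x, y, z, hx, hy, hz, -, -, rfl⟩
    positivity
  · have hr := Real.sqrt_nonneg (5 - 3 * C)
    have hrr : Real.sqrt (5 - 3 * C) ^ 2 = 5 - 3 * C := Real.sq_sqrt (by linarith)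
    generalize Real.sqrt (5 - 3 * C) = r at *
    have : r ≤ s := abs_le_of_sq_le_sq' (by linarith) hs |>.2
    exact ⟨(s + r) / 4, s / 2, (s - r) / 4, by linarith, by linarith, by linarith, by nlinarith,
      by ring, by nlinarith⟩
  · rintro w ⟨x, y, z, hx, hy, hz, h, h', rfl⟩
    obtain rfl : y = s - x - z := by linarith
    nlinarith [sq_nonneg (x + z - s / 2)]
  · have hr := Real.sqrt_nonneg (1 - C / 2)
    have hrr : Real.sqrt (1 - C / 2) ^ 2 = 1 - C / 2 := Real.sq_sqrt (by linarith)
    generalize Real.sqrt (1 - C / 2) = t at *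
    have : t ≤ s := abs_le_of_sq_le_sq' (by linarith) hs |>.2
    exact ⟨(s - t) / 3, (s + 2 * t) / 3, (s - t) / 3, by linarith, by linarith, by linarith,
      by nlinarith, by ring, by ring⟩
  · rintro w ⟨x, y, z, hx, hy, hz, h, h', rfl⟩
    have hr := Real.sqrt_nonneg (1 - C / 2)
    have hrr : Real.sqrt (1 - C / 2) ^ 2 = 1 - C / 2 := Real.sq_sqrt (by linarith)
    generalize Real.sqrt (1 - C / 2) = t at *
    have h4 : 4 * t ≤ s := abs_le_of_sq_le_sq' (by nlinarith) hs |>.2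
    obtain rfl : y = s - x - z := by linarith
    have hp : -(2 * t / 3) ≤ x + z - 2 * s / 3 :=
      (abs_le_of_sq_le_sq' (by nlinarith [sq_nonneg (x - z)]) (by linarith)).1
    have := mul_nonneg (show 0 ≤ (x + z) - 2 * (s - t) / 3 by linarith)
      (show 0 ≤ (x + z) + 2 * (s - t) / 3 - s by linarith)
    nlinarith
end
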